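/- Let A be the adjacency matrix of a finite simple graph G (a symmetric integer matrix), with spectral decomposition A = Σ_{r=0}^d θ_r E_r. Then every entry of the average mixing matrix M̂ = Σ_{r=0}^d E_r ∘ E_r is a rational number; that is, for all vertices a, b, Σ_{r=0}^d ((E_r)_{ab})² ∈ ℚ. -/

import Mathlib

open Matrix

/-- Fitting-type decomposition for the commutator with a rational symmetric matrix. -/
lemma commutator_decomp {n : ℕ} (B : Matrix (Fin n) (Fin n) ℚ) (hB : Bᵀ = B)
    (X : Matrix (Fin n) (Fin n) ℚ) :
    ∃ K Y : Matrix (Fin n) (Fin n) ℚ, B * K = K * B ∧ X = K + (B * Y - Y * B) := by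
  let L : Matrix (Fin n) (Fin n) ℚ →ₗ[ℚ] Matrix (Fin n) (Fin n) ℚ :=
    LinearMap.mulLeft ℚ B - LinearMap.mulRight ℚ B
  have hL : ∀ Y, L Y = B * Y - Y * B := fun Y => by simp [L]
  have hdis : Disjoint (LinearMap.range L) (LinearMap.ker L) := by
    rw [Submodule.disjoint_def]
    rintro Z ⟨Y, hY⟩ hZ
    rw [LinearMap.mem_ker, hL] at hZ
    rw [hL] at hY
    have h1 : (Zᵀ * Z).trace = (Yᵀ * (B * Z - Z * B)).trace := by
      nth_rewrite 1 [← hY]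
      simp only [transpose_sub, transpose_mul, hB, sub_mul, mul_sub, trace_sub]
      rw [Matrix.mul_assoc B, trace_mul_comm B, Matrix.mul_assoc, Matrix.mul_assoc]
    rw [hZ, mul_zero, trace_zero] at h1
    ext i j
    simp only [trace, diag, mul_apply, transpose_apply] at h1
    rw [Finset.sum_eq_zero_iff_of_nonneg
      (fun i _ => Finset.sum_nonneg fun j _ => mul_self_nonneg _)] at h1
    have h2 := h1 j (Finset.mem_univ _)
    rw [Finset.sum_eq_zero_iff_of_nonneg (fun j _ => mul_self_nonneg _)] at h2
    simpa using h2 i (Finset.mem_univ _)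
  have htop : LinearMap.range L ⊔ LinearMap.ker L = ⊤ :=
    Submodule.eq_top_of_disjoint _ _ (by rw [LinearMap.finrank_range_add_finrank_ker]) hdis
  have hX : X ∈ LinearMap.range L ⊔ LinearMap.ker L := htop ▸ Submodule.mem_top
  obtain ⟨_, ⟨Y, rfl⟩, K, hK, h⟩ := Submodule.mem_sup.mp hX
  rw [LinearMap.mem_ker, hL] at hK
  exact ⟨K, Y, sub_eq_zero.mp hK, by rw [← h, hL, add_comm]⟩

/-- For the adjacency matrix `A = ∑ r, θ r • E r` of a finite simple
graph, every entry of the average mixing matrix `M̂ = ∑ r, E r ∘ E r` is rational: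
`∑ r, ((E r)_{ab})² ∈ ℚ` for all vertices `a`, `b`. -/
theorem average_mixing_matrix_rational
    {n d : ℕ} (G : SimpleGraph (Fin n)) [DecidableRel G.Adj]
    (A : Matrix (Fin n) (Fin n) ℝ) (hA : A = G.adjMatrix ℝ)
    (θ : Fin (d + 1) → ℝ) (hθ : Function.Injective θ)
    (E : Fin (d + 1) → Matrix (Fin n) (Fin n) ℝ)
    (hspec : A = ∑ r, θ r • E r)
    (hsym : ∀ r, (E r)ᵀ = E r)
    (hidem : ∀ r, E r * E r = E r)
    (horth : ∀ r s, r ≠ s → E r * E s = 0)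
    (hsum : ∑ r, E r = 1)
    (hE0 : ∀ r, E r ≠ 0) :
    ∀ a b : Fin n, ∃ q : ℚ, (∑ r, (E r a b) ^ 2) = (q : ℝ) := by
  intro a b
  have hAE : ∀ r, A * E r = θ r • E r := by
    intro r
    rw [hspec, Finset.sum_mul, Finset.sum_eq_single r]
    · rw [smul_mul_assoc, hidem]
    · intro s _ hs
      rw [smul_mul_assoc, horth s r hs, smul_zero]
    · simp
  have hEA : ∀ r, E r * A = θ r • E r := by
    intro r
    rw [hspec, Finset.mul_sum, Finset.sum_eq_single r]
    · rw [mul_smul_comm, hidem]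
    · intro s _ hs
      rw [mul_smul_comm, horth r s hs.symm, smul_zero]
    · simp
  let c : ℚ →+* ℝ := Rat.castHom ℝ
  have hBA : (G.adjMatrix ℚ).map c = A := by
    rw [hA]
    ext i j
    simp only [map_apply, SimpleGraph.adjMatrix_apply]
    split_ifs <;> simp
  obtain ⟨K, Y, hK, hX⟩ := commutator_decomp (G.adjMatrix ℚ) (by simp) (single b b 1)
  have hK' : A * K.map c = K.map c * A := by
    have := congrArg (fun M => M.map c) hK
    simpa only [Matrix.map_mul, hBA] using this
  have hX' : single b b (1 : ℝ) = K.map c + (A * Y.map c - Y.map c * A) := by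
    rw [← hBA, ← Matrix.map_mul, ← Matrix.map_mul, ← Matrix.map_sub c (map_sub c),
      ← Matrix.map_add c (map_add c), ← hX]
    ext i j
    simp [single_apply, apply_ite c]
  have hoff : ∀ r s, r ≠ s → E r * K.map c * E s = 0 := by
    intro r s hrs
    have h1 : E r * (A * K.map c) * E s = E r * (K.map c * A) * E s := by rw [hK']
    rw [← Matrix.mul_assoc (E r) A, hEA, ← Matrix.mul_assoc (E r) (K.map c) A,
      Matrix.mul_assoc _ A (E s), hAE, smul_mul_assoc, smul_mul_assoc, mul_smul_comm,
      ← sub_eq_zero, ← sub_smul, smul_eq_zero] at h1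
    exact h1.resolve_left (sub_ne_zero.mpr (hθ.ne hrs))
  have hPK : ∑ r, E r * K.map c * E r = K.map c := by
    have h1 : K.map c = ∑ r, ∑ s, E r * K.map c * E s := by
      simp only [← Finset.mul_sum, ← Finset.sum_mul, hsum, Matrix.mul_one, Matrix.one_mul]
    conv_rhs => rw [h1]
    refine Finset.sum_congr rfl fun r _ => ?_
    rw [Finset.sum_eq_single r (fun s _ hs => hoff r s hs.symm) (by simp)]
  have hPX : ∑ r, E r * single b b (1 : ℝ) * E r = K.map c := by
    rw [← hPK]
    refine Finset.sum_congr rfl fun r _ => ?_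
    rw [hX', mul_add, add_mul, mul_sub, sub_mul, ← Matrix.mul_assoc (E r) A, hEA,
      ← Matrix.mul_assoc (E r) (Y.map c) A, Matrix.mul_assoc _ A (E r), hAE, smul_mul_assoc,
      smul_mul_assoc, mul_smul_comm, sub_self, add_zero]
  refine ⟨K a a, ?_⟩
  have h := congrFun (congrFun hPX a) a
  rw [Matrix.sum_apply, map_apply] at h
  change _ = c (K a a)
  rw [← h]
  refine Finset.sum_congr rfl fun r _ => ?_
  have hs : E r b a = E r a b := by
    conv_lhs => rw [← hsym r, transpose_apply]
  simp [mul_apply, single_apply, ite_and, Finset.sum_ite_eq, hs, sq]
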